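/- arXiv:2505.08935 — 4 statements merged into one kernel-verified Lean document; each statement's English description precedes it below -/
import Mathlib

section
/- Let p ≥ 3 be a prime number. Then for every integer n ≥ 0, (p−1)·ν_p(P_n(p)) = 2·s_p(⌊n/2⌋) − s_p(n) + (n mod 2)·p, where s_p(n) denotes the sum of the base-p digits of n. -/
/-!
Write `n = 2m + e` with `e = n % 2`, and let `U j = C(n, m - j) C(2(m + e + j), n)`, so that
`2 ^ n P_n(p) = ∑ j ≤ m, (-1) ^ (m - j) U j p ^ (2 j + e)`. The term `j = 0` has strictly smaller
`p`-adic valuation than all the others. Indeed consecutive coefficients satisfy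
`(2j + e + 1) (2j + e + 2) U (j + 1) = 2 (m - j) (2(m + e + j) + 1) U j` (`coeff_step`), whence
`U 0 ∣ (2j + e)! U j` (`coeff_dvd`); and by Legendre's formula `ν_p((2j + e)!) ≤ j < 2j` when
`j ≥ 1` and `p ≥ 3`. Hence `ν_p(P_n(p)) = ν_p(U 0) + e`. Finally
`U 0 * (m!) ^ 2 = 2 ^ e * n!` (`coeff_zero_mul`), and Legendre's formula for `n!` and `m!`
evaluates `ν_p(U 0)` in terms of digit sums.
-/


/-- The Legendre polynomial `P_n` evaluated at a rational `x`. -/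
def legendreP (n : ℕ) (x : ℚ) : ℚ :=
  (1 / 2 ^ n) * ∑ k ∈ Finset.range (n / 2 + 1),
    (-1 : ℚ) ^ k * (n.choose k : ℚ) * (((2 * n - 2 * k).choose n : ℕ) : ℚ) * x ^ (n - 2 * k)

/-- The absolute value of the coefficient of `x ^ (2 * j + e)` in `2 ^ n * P_n(x)`, where
`n = 2 * m + e`; meaningful for `j ≤ m`. -/
def legendreCoeff (m e j : ℕ) : ℕ :=
  (2 * m + e).choose (m - j) * (2 * (m + e + j)).choose (2 * m + e)

lemma coeff_step (m e j : ℕ) (hj : j < m) :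
    (2 * j + e + 1) * (2 * j + e + 2) * legendreCoeff m e (j + 1)
      = 2 * (m - j) * (2 * (m + e + j) + 1) * legendreCoeff m e j := by
  obtain ⟨k, rfl⟩ : ∃ k, m = j + 1 + k := ⟨m - (j + 1), by omega⟩
  have e1 : j + 1 + k - (j + 1) = k := by omega
  have e2 : j + 1 + k - j = k + 1 := by omega
  simp only [legendreCoeff, e1, e2]
  set n := 2 * (j + 1 + k) + e with hn
  set M := 2 * (j + 1 + k + e + j) with hM
  have e3 : 2 * (j + 1 + k + e + (j + 1)) = M + 2 := by omega
  rw [e3]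
  have h1 := Nat.choose_succ_right_eq n k
  have h2 := Nat.choose_mul_succ_eq M n
  have h3 := Nat.choose_mul_succ_eq (M + 1) n
  rw [show n - k = j + 1 + k + e + j + 1 by omega] at h1
  rw [show M + 1 - n = 2 * j + e + 1 by omega] at h2
  rw [show M + 1 + 1 - n = 2 * j + e + 2 by omega, show M + 1 + 1 = M + 2 from rfl] at h3
  have h4 : M + 2 = 2 * (j + 1 + k + e + j + 1) := by omega
  calc (2 * j + e + 1) * (2 * j + e + 2) * (n.choose k * (M + 2).choose n)
      = (2 * j + e + 1) * n.choose k * ((M + 2).choose n * (2 * j + e + 2)) := by ring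
    _ = n.choose k * (M + 2) * ((M + 1).choose n * (2 * j + e + 1)) := by rw [← h3]; ring
    _ = 2 * (n.choose k * (j + 1 + k + e + j + 1)) * (M.choose n * (M + 1)) := by
        rw [← h2, h4]; ring
    _ = 2 * (k + 1) * (M + 1) * (n.choose (k + 1) * M.choose n) := by rw [← h1]; ring

lemma coeff_dvd (m e j : ℕ) (hj : j ≤ m) :
    legendreCoeff m e 0 ∣ (2 * j + e).factorial * legendreCoeff m e j := by
  induction j with
  | zero => exact dvd_mul_left _ _
  | succ j ih =>
    have h := coeff_step m e j (by omega)
    have : (2 * (j + 1) + e).factorial * legendreCoeff m e (j + 1)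
        = 2 * (m - j) * (2 * (m + e + j) + 1)
          * ((2 * j + e).factorial * legendreCoeff m e j) := by
      rw [show 2 * (j + 1) + e = 2 * j + e + 1 + 1 by ring, Nat.factorial_succ, Nat.factorial_succ]
      linear_combination (2 * j + e).factorial * h
    rw [this]
    exact (ih (by omega)).mul_left _

lemma coeff_zero_mul (m e : ℕ) (he : e < 2) :
    legendreCoeff m e 0 * (m.factorial * m.factorial) = 2 ^ e * (2 * m + e).factorial := by
  have h := Nat.choose_mul_factorial_mul_factorial (show m ≤ 2 * m + e by omega)
  rw [show 2 * m + e - m = m + e by omega] at h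
  interval_cases e
  · simp only [legendreCoeff, add_zero, Nat.sub_zero, Nat.choose_self] at h ⊢
    linear_combination h
  · simp only [legendreCoeff, add_zero, Nat.sub_zero,
      show 2 * (m + 1) = 2 * m + 1 + 1 by ring, Nat.choose_succ_self_right]
    rw [Nat.factorial_succ m] at h
    linear_combination 2 * h

lemma coeff_pos (m e j : ℕ) (hj : j ≤ m) : 0 < legendreCoeff m e j :=
  Nat.mul_pos (Nat.choose_pos (by omega)) (Nat.choose_pos (by omega))

/-- Every term of `2 ^ n * P_n(p)` other than the lowest one has larger valuation than the lowest
one. -/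
lemma pow_dvd_coeff (p : ℕ) [Fact p.Prime] (hp3 : 3 ≤ p) (m e j : ℕ) (he : e < 2)
    (hj : j ≤ m) (hj0 : 0 < j) :
    p ^ (padicValNat p (legendreCoeff m e 0) + e + 1)
      ∣ legendreCoeff m e j * p ^ (2 * j + e) := by
  have hU := (coeff_pos m e j hj).ne'
  have h1 : padicValNat p (legendreCoeff m e 0)
      ≤ padicValNat p (2 * j + e).factorial + padicValNat p (legendreCoeff m e j) := by
    rw [← padicValNat.mul (Nat.factorial_ne_zero _) hU]
    exact padicValNat_dvd_iff_le (Nat.mul_ne_zero (Nat.factorial_ne_zero _) hU) |>.mp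
      (pow_padicValNat_dvd.trans (coeff_dvd m e j hj))
  have h2 : (p - 1) * padicValNat p (2 * j + e).factorial < 2 * j + e :=
    sub_one_mul_padicValNat_factorial_lt_of_ne_zero p (by omega)
  have h3 : 2 * padicValNat p (2 * j + e).factorial
      ≤ (p - 1) * padicValNat p (2 * j + e).factorial := Nat.mul_le_mul_right _ (by omega)
  calc p ^ (padicValNat p (legendreCoeff m e 0) + e + 1)
      ∣ p ^ (padicValNat p (legendreCoeff m e j) + (2 * j + e)) := pow_dvd_pow _ (by omega)
    _ ∣ _ := by rw [pow_add]; exact mul_dvd_mul_right pow_padicValNat_dvd _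

lemma val_coeff_zero (p : ℕ) [Fact p.Prime] (hp3 : 3 ≤ p) (m e : ℕ) (he : e < 2) :
    ((p : ℤ) - 1) * padicValNat p (legendreCoeff m e 0)
      = 2 * ((Nat.digits p m).sum : ℤ) - ((Nat.digits p (2 * m + e)).sum : ℤ) + e := by
  have hm := Nat.factorial_ne_zero m
  have hn := Nat.factorial_ne_zero (2 * m + e)
  have h := congrArg (padicValNat p) (coeff_zero_mul m e he)
  have h2 : padicValNat p (2 ^ e) = 0 := by
    apply padicValNat.eq_zero_of_not_dvd
    intro hd
    have := Nat.le_of_dvd two_pos (Fact.out (p := p.Prime) |>.dvd_of_dvd_pow hd)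
    omega
  rw [padicValNat.mul (coeff_pos m e 0 (by omega)).ne' (mul_ne_zero hm hm),
    padicValNat.mul hm hm, padicValNat.mul (by positivity) hn, h2, zero_add] at h
  have l1 := sub_one_mul_padicValNat_factorial (p := p) m
  have l2 := sub_one_mul_padicValNat_factorial (p := p) (2 * m + e)
  have d1 := Nat.digit_sum_le p m
  have d2 := Nat.digit_sum_le p (2 * m + e)
  generalize (Nat.digits p m).sum = s₁ at *
  generalize (Nat.digits p (2 * m + e)).sum = s₂ at *
  generalize padicValNat p m.factorial = a at *
  generalize padicValNat p (2 * m + e).factorial = b at *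
  generalize padicValNat p (legendreCoeff m e 0) = c at *
  zify [d1, d2, show 1 ≤ p by omega] at h l1 l2
  linear_combination ((p : ℤ) - 1) * h + l2 - 2 * l1

/-- An integer of valuation exactly `v`, perturbed by a multiple of `p ^ (v + 1)`, still has
valuation `v`. -/
lemma val_add_of_dvd (p : ℕ) [Fact p.Prime] (v : ℕ) (a b : ℤ) (ha : (p : ℤ) ^ v ∣ a)
    (ha' : ¬ (p : ℤ) ^ (v + 1) ∣ a) (hb : (p : ℤ) ^ (v + 1) ∣ b) :
    b + a ≠ 0 ∧ padicValInt p (b + a) = v := by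
  have h1 : ¬ (p : ℤ) ^ (v + 1) ∣ b + a := fun h => ha' ((dvd_add_right hb).mp h)
  have h2 : (p : ℤ) ^ v ∣ b + a := dvd_add ((pow_dvd_pow _ (by omega)).trans hb) ha
  have h0 : b + a ≠ 0 := fun h => h1 (h ▸ dvd_zero _)
  rw [padicValInt_dvd_iff] at h1 h2
  refine ⟨h0, ?_⟩
  push Not at h1
  have := h2.resolve_left h0
  have := h1.2
  omega

theorem stmt6 (p : ℕ) (hp : p.Prime) (hp3 : 3 ≤ p) (n : ℕ) :
    ((p : ℤ) - 1) * padicValRat p (legendreP n (p : ℚ))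
      = 2 * ((Nat.digits p (n / 2)).sum : ℤ) - ((Nat.digits p n).sum : ℤ)
        + ((n % 2 : ℕ) : ℤ) * (p : ℤ) := by
  have : Fact p.Prime := ⟨hp⟩
  obtain ⟨m, e, he, rfl⟩ : ∃ m e, e < 2 ∧ n = 2 * m + e :=
    ⟨n / 2, n % 2, Nat.mod_lt _ two_pos, (Nat.div_add_mod n 2).symm⟩
  rw [show (2 * m + e) / 2 = m by omega, show (2 * m + e) % 2 = e by omega]
  let t : ℕ → ℤ := fun k =>
    (-1) ^ k * ((legendreCoeff m e (m - k) * p ^ (2 * (m - k) + e) : ℕ) : ℤ)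
  have hP : legendreP (2 * m + e) (p : ℚ)
      = ((∑ k ∈ Finset.range m, t k + t m : ℤ) : ℚ) / 2 ^ (2 * m + e) := by
    rw [← Finset.sum_range_succ, legendreP, show (2 * m + e) / 2 = m by omega, one_div_mul_eq_div,
      Int.cast_sum]
    congr 1
    refine Finset.sum_congr rfl fun k hk => ?_
    have hk : k ≤ m := by simpa [Nat.lt_succ_iff] using hk
    simp only [t, legendreCoeff]
    rw [show m - (m - k) = k by omega,
      show 2 * (2 * m + e) - 2 * k = 2 * (m + e + (m - k)) by omega,
      show 2 * m + e - 2 * k = 2 * (m - k) + e by omega]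
    push_cast
    ring
  set v := padicValNat p (legendreCoeff m e 0) with hv
  have htm : t m = (-1) ^ m * ((legendreCoeff m e 0 * p ^ e : ℕ) : ℤ) := by simp [t]
  have hU := (coeff_pos m e 0 (by omega)).ne'
  have hval : padicValNat p (legendreCoeff m e 0 * p ^ e) = v + e := by
    rw [padicValNat.mul hU (pow_ne_zero _ hp.ne_zero), padicValNat.prime_pow]
  have hunit : IsUnit ((-1 : ℤ) ^ m) := isUnit_one.neg.pow m
  obtain ⟨h0, hS⟩ := val_add_of_dvd p (v + e) (t m) (∑ k ∈ Finset.range m, t k)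
    (by
      rw [htm, hunit.dvd_mul_left, ← hval]
      exact_mod_cast pow_padicValNat_dvd)
    (by
      rw [htm, hunit.dvd_mul_left, ← hval]
      exact_mod_cast pow_succ_padicValNat_not_dvd (mul_ne_zero hU (pow_ne_zero _ hp.ne_zero)))
    (Finset.dvd_sum fun k hk => by
      have hk := Finset.mem_range.mp hk
      exact Dvd.dvd.mul_left
        (by exact_mod_cast pow_dvd_coeff p hp3 m e (m - k) he (by omega) (by omega)) _)
  have h2 : padicValRat p ((2 : ℚ) ^ (2 * m + e)) = 0 := by
    have : padicValNat p 2 = 0 :=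
      padicValNat.eq_zero_of_not_dvd fun hd => by
        have := Nat.le_of_dvd two_pos hd
        omega
    rw [padicValRat.pow, show (2 : ℚ) = ((2 : ℕ) : ℚ) by norm_num, padicValRat.of_nat,
      this]
    simp
  rw [hP, padicValRat.div (by exact_mod_cast h0) (by positivity), h2, padicValRat.of_int, hS]
  have := val_coeff_zero p hp3 m e he
  rw [← hv] at this
  rw [Nat.cast_add]
  linear_combination this
end

section
/- Let p ≥ 3 be a prime number. Then for every integer n ≥ 0, ν_p(M_n(p)) = ν_p(P_n(p)), where M_n(x) := Σ_{k=0}^n C(n,k)^2 (x−1)^k. -/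
/-- Cigler's polynomial `M_n(x) = ∑_{k=0}^n C(n,k)^2 (x-1)^k`. -/
def ciglerM (n : ℕ) (x : ℚ) : ℚ :=
  ∑ k ∈ Finset.range (n + 1), (n.choose k : ℚ) ^ 2 * (x - 1) ^ k

open Polynomial in
lemma coeff_one_add_C_mul_X_pow (t : ℚ) (n k : ℕ) :
    ((1 + C t * X : ℚ[X]) ^ n).coeff k = (n.choose k : ℚ) * t ^ k := by
  have h : (1 + C t * X : ℚ[X]) ^ n = ((1 + X : ℚ[X]) ^ n).comp (C t * X) := by simp
  rw [h, comp_C_mul_X_coeff, coeff_one_add_X_pow]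

open Polynomial in
lemma coeff_one_add_C_mul_X_sq_pow (t : ℚ) (n k : ℕ) :
    ((1 + C t * X ^ 2 : ℚ[X]) ^ n).coeff k =
      if 2 ∣ k then (n.choose (k / 2) : ℚ) * t ^ (k / 2) else 0 := by
  have h : (1 + C t * X ^ 2 : ℚ[X]) ^ n = expand ℚ 2 ((1 + C t * X : ℚ[X]) ^ n) := by simp
  rw [h, coeff_expand (by norm_num), coeff_one_add_C_mul_X_pow]

open Polynomial in
/-- The coefficient of `X ^ n` in `(1 + (x - 1) X) ^ n * (1 + X) ^ n`, computed in two ways. The sum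
is indexed by the exponent `2i + ε` of `x`. -/
lemma ciglerM_eq (m ε : ℕ) (hε : ε ≤ 1) (x : ℚ) :
    ciglerM (2 * m + ε) x = ∑ i ∈ Finset.range (m + 1),
      ((2 * m + ε).choose (2 * (m - i)) : ℚ) * ((2 * (m - i)).choose (m - i) : ℚ)
        * x ^ (2 * i + ε) * (x - 1) ^ (m - i) := by
  set n := 2 * m + ε with hn
  have h1 : ((1 + C (x - 1) * X : ℚ[X]) ^ n * (1 + X) ^ n).coeff n = ciglerM n x := by
    rw [coeff_mul, Finset.Nat.sum_antidiagonal_eq_sum_range_succ_mk]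
    unfold ciglerM
    refine Finset.sum_congr rfl fun k hk => ?_
    have hk' : k ≤ n := by simpa [Nat.lt_succ_iff] using hk
    rw [coeff_one_add_C_mul_X_pow, coeff_one_add_X_pow]
    simp only [Nat.choose_symm hk']
    ring
  have h2 : (1 + C (x - 1) * X : ℚ[X]) ^ n * (1 + X) ^ n
      = ((1 + C (x - 1) * X ^ 2) + C x * X) ^ n := by
    rw [← mul_pow]
    congr 1
    simp only [C_sub, C_1]
    ring
  rw [← h1, h2, add_pow, finsetSum_coeff]
  symm
  refine Finset.sum_of_injOn (fun i => 2 * (m - i)) ?_ ?_ ?_ ?_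
  · intro a ha b hb hab
    simp at ha hb hab
    omega
  · intro a ha
    simp at ha ⊢
    omega
  · intro j hj hj'
    have hjn : j ≤ n := by simpa [Nat.lt_succ_iff] using hj
    have hodd : ¬ 2 ∣ j := by
      rintro ⟨c, rfl⟩
      apply hj'
      refine ⟨m - c, ?_, ?_⟩
      · simp
      · show 2 * (m - (m - c)) = 2 * c
        omega
    have : (1 + C (x - 1) * X ^ 2 : ℚ[X]) ^ j * (C x * X) ^ (n - j) * (n.choose j : ℚ[X])
        = (1 + C (x - 1) * X ^ 2 : ℚ[X]) ^ j * C (x ^ (n - j) * (n.choose j : ℚ))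
          * X ^ (n - j) := by
      simp only [mul_pow, C_mul, C_pow, map_natCast]
      ring
    rw [this, coeff_mul_X_pow', if_pos (by omega), coeff_mul_C, coeff_one_add_C_mul_X_sq_pow,
      Nat.sub_sub_self hjn, if_neg hodd, zero_mul]
  · intro i hi
    have him : i ≤ m := by simpa [Nat.lt_succ_iff] using hi
    have hjn : 2 * (m - i) ≤ n := by omega
    have he : n - 2 * (m - i) = 2 * i + ε := by omega
    generalize hj : 2 * (m - i) = j at *
    have : (1 + C (x - 1) * X ^ 2 : ℚ[X]) ^ j * (C x * X) ^ (n - j) * (n.choose j : ℚ[X])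
        = (1 + C (x - 1) * X ^ 2 : ℚ[X]) ^ j * C (x ^ (n - j) * (n.choose j : ℚ))
          * X ^ (n - j) := by
      simp only [mul_pow, C_mul, C_pow, map_natCast]
      ring
    rw [this, coeff_mul_X_pow', if_pos (by omega), coeff_mul_C, coeff_one_add_C_mul_X_sq_pow,
      Nat.sub_sub_self hjn, if_pos ⟨_, hj.symm⟩, he]
    have : j / 2 = m - i := by omega
    rw [this]
    ring

open Nat in
lemma padicNorm_pow_div_factorial_lt_one (p : ℕ) [Fact p.Prime] (hp3 : 3 ≤ p) (i ε : ℕ)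
    (hε : ε ≤ 1) (hi : i ≠ 0) :
    padicNorm p ((p : ℚ) ^ (2 * i) / ((2 * i + ε)! : ℚ)) < 1 := by
  have hp : p.Prime := Fact.out
  have hpq : (p : ℚ) ≠ 0 := by exact_mod_cast hp.ne_zero
  have hf : ((2 * i + ε)! : ℚ) ≠ 0 := by exact_mod_cast (Nat.factorial_ne_zero _)
  have hv : padicValNat p ((2 * i + ε)!) < 2 * i := by
    have h := sub_one_mul_padicValNat_factorial (p := p) (2 * i + ε)
    have hs : 1 ≤ (p.digits (2 * i + ε)).sum := by
      by_contra hs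
      have h0 : (p.digits (2 * i + ε)).sum = 0 := by omega
      have h1 := Nat.modEq_digits_sum p
      have hne : p.digits (2 * i + ε) ≠ [] := Nat.digits_ne_nil_iff_ne_zero.mpr (by omega)
      have hl := Nat.getLast_digit_ne_zero p (m := 2 * i + ε) (by omega)
      exact hl (List.sum_eq_zero_iff.mp h0 _ (List.getLast_mem hne))
    have h2 : 2 * padicValNat p ((2 * i + ε)!) ≤ (p - 1) * padicValNat p ((2 * i + ε)!) :=
      Nat.mul_le_mul_right _ (by omega)
    omega
  rw [padicNorm.eq_zpow_of_nonzero (div_ne_zero (pow_ne_zero _ hpq) hf),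
    padicValRat.div (pow_ne_zero _ hpq) hf, padicValRat.pow, padicValRat.self hp.one_lt,
    padicValRat.of_nat]
  apply zpow_lt_one_of_neg₀ (by exact_mod_cast hp.one_lt)
  omega

open Nat in
/-- A sum `∑ c i * p ^ (2i) / (2i + ε)!` with `p ∤ c 0` is a `p`-adic unit. Nonvanishing is stated
separately, since `padicValRat p 0 = 0`. -/
lemma padicValRat_sum_eq_zero (p : ℕ) [Fact p.Prime] (hp3 : 3 ≤ p) (m ε : ℕ) (hε : ε ≤ 1)
    (c : ℕ → ℤ) (hc : ¬ (p : ℤ) ∣ c 0) :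
    (∑ i ∈ Finset.range (m + 1), (c i : ℚ) * ((p : ℚ) ^ (2 * i) / ((2 * i + ε)! : ℚ))) ≠ 0 ∧
    padicValRat p (∑ i ∈ Finset.range (m + 1),
      (c i : ℚ) * ((p : ℚ) ^ (2 * i) / ((2 * i + ε)! : ℚ))) = 0 := by
  have hp : p.Prime := Fact.out
  have hε1 : (ε ! : ℚ) = 1 := by interval_cases ε <;> simp
  rw [Finset.sum_range_succ']
  simp only [mul_zero, pow_zero, zero_add, hε1, div_one, mul_one]
  set R := ∑ k ∈ Finset.range m,
    (c (k + 1) : ℚ) * ((p : ℚ) ^ (2 * (k + 1)) / ((2 * (k + 1) + ε)! : ℚ)) with hR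
  have hRlt : padicNorm p R < 1 := by
    refine padicNorm.sum_lt' (fun k _ => ?_) one_pos
    rw [padicNorm.mul]
    have h1 := padicNorm_pow_div_factorial_lt_one p hp3 (k + 1) ε hε (by omega)
    exact (mul_le_of_le_one_left (padicNorm.nonneg _) (padicNorm.of_int _)).trans_lt h1
  have hc1 : padicNorm p (c 0 : ℚ) = 1 := (padicNorm.int_eq_one_iff _).mpr hc
  have hS : padicNorm p (R + c 0) = 1 := by
    rw [padicNorm.add_eq_max_of_ne (by rw [hc1]; exact hRlt.ne), hc1, max_eq_right hRlt.le]
  have hne : R + c 0 ≠ 0 := by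
    intro h
    rw [h, padicNorm.zero] at hS
    exact zero_ne_one hS
  refine ⟨hne, ?_⟩
  rw [padicNorm.eq_zpow_of_nonzero hne] at hS
  have h := (zpow_eq_one_iff_right₀ (by positivity) (by exact_mod_cast hp.one_lt.ne')).mp hS
  omega

open Nat in
/-- The quotient `((2M + 2i)! / (2M)!) / ((M + i)! / M!)` is an integer, namely a product of doubled
odd numbers. -/
lemma factorial_two_mul_add (M i : ℕ) :
    (2 * (M + i))! * M ! =
      (∏ j ∈ Finset.range i, 2 * (2 * (M + j) + 1)) * ((2 * M)! * (M + i)!) := by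
  induction i with
  | zero => simp
  | succ i ih =>
    have e1 : 2 * (M + (i + 1)) = 2 * (M + i) + 1 + 1 := by ring
    have e2 : M + (i + 1) = M + i + 1 := by ring
    rw [Finset.prod_range_succ, e1, e2, Nat.factorial_succ, Nat.factorial_succ,
      Nat.factorial_succ (M + i)]
    linear_combination (2 * (M + i) + 1 + 1) * (2 * (M + i) + 1) * ih

open Nat in
lemma cigler_form (m ε : ℕ) (hε : ε ≤ 1) (p : ℕ) :
    ciglerM (2 * m + ε) p = ((2 * m + ε)! : ℚ) / (m ! : ℚ) ^ 2 * (p : ℚ) ^ ε *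
      ∑ i ∈ Finset.range (m + 1),
        (((m.descFactorial i : ℤ) ^ 2 * ((p : ℤ) - 1) ^ (m - i) : ℤ) : ℚ)
          * ((p : ℚ) ^ (2 * i) / ((2 * i + ε)! : ℚ)) := by
  rw [ciglerM_eq m ε hε, Finset.mul_sum]
  refine Finset.sum_congr rfl fun i hi => ?_
  have him : i ≤ m := by simpa [Nat.lt_succ_iff] using hi
  rw [Nat.cast_choose ℚ (show 2 * (m - i) ≤ 2 * m + ε by omega),
    Nat.cast_choose ℚ (show m - i ≤ 2 * (m - i) by omega),
    show 2 * m + ε - 2 * (m - i) = 2 * i + ε by omega,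
    show 2 * (m - i) - (m - i) = m - i by omega]
  have hd : (m ! : ℚ) = ((m - i)! : ℚ) * (m.descFactorial i : ℚ) := by
    exact_mod_cast (Nat.factorial_mul_descFactorial him).symm
  have hd0 : (m.descFactorial i : ℚ) ≠ 0 := by
    exact_mod_cast (Nat.descFactorial_eq_zero_iff_lt.not.mpr (by omega))
  have h1 : ((m - i)! : ℚ) ≠ 0 := by exact_mod_cast Nat.factorial_ne_zero _
  have h2 : ((2 * i + ε)! : ℚ) ≠ 0 := by exact_mod_cast Nat.factorial_ne_zero _
  have h3 : ((2 * (m - i))! : ℚ) ≠ 0 := by exact_mod_cast Nat.factorial_ne_zero _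
  rw [hd]
  push_cast
  field_simp
  ring

open Nat in
lemma legendre_form (m ε : ℕ) (hε : ε ≤ 1) (p : ℕ) :
    legendreP (2 * m + ε) p = 2 ^ ε / 2 ^ (2 * m + ε) *
      (((2 * m + ε)! : ℚ) / (m ! : ℚ) ^ 2 * (p : ℚ) ^ ε *
      ∑ i ∈ Finset.range (m + 1),
        (((-1) ^ (m - i) * (m.descFactorial i : ℤ) *
          ((∏ j ∈ Finset.range i, 2 * (2 * (m + ε + j) + 1) : ℕ) : ℤ) : ℤ) : ℚ)
          * ((p : ℚ) ^ (2 * i) / ((2 * i + ε)! : ℚ))) := by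
  -- The common factor read off from the defining sum is `(2(m + ε))! / ((m + ε)! m!)`.
  have hA : (2 : ℚ) ^ ε * (((2 * m + ε)! : ℚ) / (m ! : ℚ) ^ 2)
      = ((2 * (m + ε))! : ℚ) / (((m + ε)! : ℚ) * (m ! : ℚ)) := by
    have h1 : (m ! : ℚ) ≠ 0 := by exact_mod_cast Nat.factorial_ne_zero _
    interval_cases ε
    · simp [pow_two]
    · rw [show 2 * (m + 1) = 2 * m + 1 + 1 by ring, Nat.factorial_succ (2 * m + 1),
        Nat.factorial_succ m]
      push_cast
      have : (m : ℚ) + 1 ≠ 0 := by positivity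
      field_simp
      ring
  unfold legendreP
  rw [show (2 * m + ε) / 2 = m by omega]
  have key : ∀ a b c d e : ℚ, a / b * (c * d * e) = a * c * d * e / b := fun a b c d e => by ring
  rw [← Finset.sum_range_reflect, one_div, inv_mul_eq_div, key, hA, Finset.mul_sum,
    Finset.sum_div, Finset.sum_div]
  refine Finset.sum_congr rfl fun i hi => ?_
  have him : i ≤ m := by simpa [Nat.lt_succ_iff] using hi
  rw [show m + 1 - 1 - i = m - i by omega,
    show 2 * (2 * m + ε) - 2 * (m - i) = 2 * (m + ε + i) by omega,
    Nat.cast_choose ℚ (show m - i ≤ 2 * m + ε by omega),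
    Nat.cast_choose ℚ (show 2 * m + ε ≤ 2 * (m + ε + i) by omega),
    show 2 * m + ε - 2 * (m - i) = 2 * i + ε by omega,
    show 2 * m + ε - (m - i) = m + ε + i by omega,
    show 2 * (m + ε + i) - (2 * m + ε) = 2 * i + ε by omega]
  have hd : (m ! : ℚ) = ((m - i)! : ℚ) * (m.descFactorial i : ℚ) := by
    exact_mod_cast (Nat.factorial_mul_descFactorial him).symm
  have hd0 : (m.descFactorial i : ℚ) ≠ 0 := by
    exact_mod_cast (Nat.descFactorial_eq_zero_iff_lt.not.mpr (by omega))
  have hP := factorial_two_mul_add (m + ε) i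
  generalize (∏ j ∈ Finset.range i, 2 * (2 * (m + ε + j) + 1)) = c at *
  have hPq : ((2 * (m + ε + i))! : ℚ) * ((m + ε)! : ℚ)
      = c * (((2 * (m + ε))! : ℚ) * ((m + ε + i)! : ℚ)) := by exact_mod_cast hP
  have h1 : ((m - i)! : ℚ) ≠ 0 := by exact_mod_cast Nat.factorial_ne_zero _
  have h2 : ((2 * i + ε)! : ℚ) ≠ 0 := by exact_mod_cast Nat.factorial_ne_zero _
  have h3 : ((m + ε)! : ℚ) ≠ 0 := by exact_mod_cast Nat.factorial_ne_zero _
  have h4 : ((m + ε + i)! : ℚ) ≠ 0 := by exact_mod_cast Nat.factorial_ne_zero _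
  have h5 : ((2 * m + ε)! : ℚ) ≠ 0 := by exact_mod_cast Nat.factorial_ne_zero _
  have hQ : ((2 * (m + ε + i))! : ℚ)
      = c * (((2 * (m + ε))! : ℚ) * ((m + ε + i)! : ℚ)) / ((m + ε)! : ℚ) := by
    rw [eq_div_iff h3, hPq]
  rw [hd, hQ]
  push_cast
  field_simp
  ring

theorem stmt9 (p : ℕ) (hp : p.Prime) (hp3 : 3 ≤ p) (n : ℕ) :
    padicValRat p (ciglerM n (p : ℚ)) = padicValRat p (legendreP n (p : ℚ)) := by
  have : Fact p.Prime := ⟨hp⟩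
  obtain ⟨m, ε, hε, rfl⟩ : ∃ m ε, ε ≤ 1 ∧ n = 2 * m + ε :=
    ⟨n / 2, n % 2, by omega, by omega⟩
  have hpZ : Prime (p : ℤ) := Nat.prime_iff_prime_int.mp hp
  have hpq : (p : ℚ) ≠ 0 := by exact_mod_cast hp.ne_zero
  have hA : ((2 * m + ε).factorial : ℚ) / (m.factorial : ℚ) ^ 2 * (p : ℚ) ^ ε ≠ 0 := by
    have := Nat.factorial_ne_zero (2 * m + ε)
    have := Nat.factorial_ne_zero m
    positivity
  rw [cigler_form m ε hε, legendre_form m ε hε]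
  obtain ⟨h1, h1'⟩ := padicValRat_sum_eq_zero p hp3 m ε hε
    (fun i => (m.descFactorial i : ℤ) ^ 2 * ((p : ℤ) - 1) ^ (m - i)) (by
      simp only [Nat.descFactorial_zero, Nat.cast_one, one_pow, one_mul]
      intro h
      exact hpZ.not_dvd_one (by simpa using dvd_sub (dvd_refl (p : ℤ)) (hpZ.dvd_of_dvd_pow h)))
  obtain ⟨h2, h2'⟩ := padicValRat_sum_eq_zero p hp3 m ε hε
    (fun i => (-1) ^ (m - i) * (m.descFactorial i : ℤ) *
          ((∏ j ∈ Finset.range i, 2 * (2 * (m + ε + j) + 1) : ℕ) : ℤ)) (by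
      simp only [Nat.descFactorial_zero, Nat.cast_one, mul_one, Finset.range_zero,
        Finset.prod_empty]
      intro h
      exact hpZ.not_dvd_one ((hpZ.dvd_of_dvd_pow h).trans (by norm_num)))
  have hv2 : padicValRat p (2 : ℚ) = 0 := by
    have h : padicValNat p 2 = 0 :=
      padicValNat.eq_zero_of_not_dvd (Nat.not_dvd_of_pos_of_lt two_pos hp3)
    have h' := padicValRat.of_nat (p := p) (n := 2)
    rw [h] at h'
    exact_mod_cast h'
  have hU : padicValRat p ((2 : ℚ) ^ ε / 2 ^ (2 * m + ε)) = 0 := by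
    rw [padicValRat.div (by positivity) (by positivity), padicValRat.pow,
      padicValRat.pow, hv2]
    simp
  rw [padicValRat.mul hA h1, h1', padicValRat.mul (by positivity) (mul_ne_zero hA h2),
    padicValRat.mul hA h2, h2', hU, zero_add]
end

section
/- Let p be a prime number and r a rational number with ν_p(r) ≥ 1. For every integer m ≥ 0, ν_p(Q_{2m}(r)) = ν_p(C(2m, m)), where Q_n(x) := Σ_{k=0}^{⌊n/2⌋} (−1)^k C(n,k) C(2n−2k, n) x^{n−2k} and C(a,b) denotes the binomial coefficient. -/
/-!
Write `k = m - j`. The coefficient of `x ^ (2j)` in `Q_{2m}` is, up to sign,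
`C(2m, m-j) C(2m+2j, 2m) = (2m+2j)! / ((m-j)! (m+j)! (2j)!)`, and its quotient by `C(2m, m)` is
`2^j (2m+1)(2m+3)⋯(2m+2j-1) · m(m-1)⋯(m-j+1) / (2j)!`, an integer divided by `(2j)!`
(`centralBinom_dvd_coeff`). By Legendre's formula `ν_p((2j)!) < 2j` for `j ≥ 1`, so
`r ^ (2j) / (2j)!` has positive valuation (`padicNorm_pow_div_factorial_lt_one`). Hence
`Q_{2m}(r) = C(2m, m) (±1 + s)` with `ν_p(s) > 0`, and the second factor is a `p`-adic unit.
-/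

/-- `Q_n(x) = ∑_{k=0}^{⌊n/2⌋} (-1)^k C(n,k) C(2n-2k, n) x^(n-2k)`, so that `Q_n = 2^n P_n`
for the Legendre polynomial `P_n`. -/
def legendreQ (n : ℕ) (x : ℚ) : ℚ :=
  ∑ k ∈ Finset.range (n / 2 + 1),
    (-1 : ℚ) ^ k * (n.choose k : ℚ) * (((2 * n - 2 * k).choose n : ℕ) : ℚ) * x ^ (n - 2 * k)

/-- The quotient `A` is `2^j (2m+1)(2m+3)⋯(2m+2j-1)`. -/
lemma factorial_dvd_factorial_mul (m j : ℕ) :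
    ∃ A : ℕ, (2 * m + 2 * j).factorial * m.factorial
      = (m + j).factorial * (2 * m).factorial * A := by
  induction j with
  | zero => exact ⟨1, by simp [mul_comm]⟩
  | succ j ih =>
    obtain ⟨A, hA⟩ := ih
    refine ⟨2 * (2 * m + 2 * j + 1) * A, ?_⟩
    have h1 : 2 * m + 2 * (j + 1) = (2 * m + 2 * j + 1) + 1 := by ring
    rw [h1, Nat.factorial_succ, Nat.factorial_succ, ← add_assoc m j 1, Nat.factorial_succ]
    calc _ = (2 * m + 2 * j + 1 + 1) * (2 * m + 2 * j + 1)
          * ((2 * m + 2 * j).factorial * m.factorial) := by ring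
      _ = _ := by rw [hA]; ring

lemma centralBinom_dvd_coeff (m j : ℕ) (hj : j ≤ m) :
    ∃ N : ℕ, (2 * m).choose (m - j) * (2 * m + 2 * j).choose (2 * m) * (2 * j).factorial
      = (2 * m).choose m * N := by
  obtain ⟨A, hA⟩ := factorial_dvd_factorial_mul m j
  refine ⟨A * m.descFactorial j, ?_⟩
  have e1 := Nat.choose_mul_factorial_mul_factorial (show m - j ≤ 2 * m by lia)
  have e2 := Nat.choose_mul_factorial_mul_factorial (show 2 * m ≤ 2 * m + 2 * j by lia)
  have e3 := Nat.choose_mul_factorial_mul_factorial (show m ≤ 2 * m by lia)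
  have e4 := Nat.factorial_mul_descFactorial hj
  rw [show 2 * m - (m - j) = m + j by lia] at e1
  rw [show 2 * m + 2 * j - 2 * m = 2 * j by lia] at e2
  rw [show 2 * m - m = m by lia] at e3
  have p1 := Nat.factorial_ne_zero (m - j)
  have p2 := Nat.factorial_ne_zero (m + j)
  have p3 := Nat.factorial_ne_zero (2 * m)
  have p4 := Nat.factorial_ne_zero m
  -- Clear all denominators: multiply both sides by `(m-j)! (m+j)! (2m)! m!`.
  apply Nat.eq_of_mul_eq_mul_right (Nat.pos_of_ne_zero
    (mul_ne_zero (mul_ne_zero p1 p2) (mul_ne_zero p3 p4)))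
  calc _ = ((2 * m).choose (m - j) * (m - j).factorial * (m + j).factorial)
        * ((2 * m + 2 * j).choose (2 * m) * (2 * m).factorial * (2 * j).factorial)
        * m.factorial := by ring
    _ = (2 * m).factorial * ((2 * m + 2 * j).factorial * m.factorial) := by
        rw [e1, e2]; ring
    _ = ((2 * m).choose m * m.factorial * m.factorial) * (m + j).factorial
        * (2 * m).factorial * A := by rw [hA, e3]; ring
    _ = (2 * m).choose m * m.factorial * ((m - j).factorial * m.descFactorial j)
        * (m + j).factorial * (2 * m).factorial * A := by rw [e4]
    _ = _ := by ring

lemma padicNorm_pow_div_factorial_lt_one_s12 (p : ℕ) [hp : Fact p.Prime] (r : ℚ)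
    (hr : 1 ≤ padicValRat p r) (n : ℕ) (hn : n ≠ 0) :
    padicNorm p (r ^ n / (n.factorial : ℚ)) < 1 := by
  -- `padicValRat p 0 = 0`, so the hypothesis on `r` forces `r ≠ 0`.
  have hr0 : r ≠ 0 := by rintro rfl; simp at hr
  have hf : (n.factorial : ℚ) ≠ 0 := by exact_mod_cast Nat.factorial_ne_zero n
  have hlt : padicValNat p n.factorial < n :=
    lt_of_le_of_lt (Nat.le_mul_of_pos_left _ (by have := hp.out.two_le; lia))
      (sub_one_mul_padicValNat_factorial_lt_of_ne_zero p hn)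
  have hv : 0 < padicValRat p (r ^ n / (n.factorial : ℚ)) := by
    rw [padicValRat.div (pow_ne_zero _ hr0) hf, padicValRat.pow, padicValRat.of_nat]
    have : (padicValNat p n.factorial : ℤ) < n := by exact_mod_cast hlt
    nlinarith
  rw [padicNorm.eq_zpow_of_nonzero (div_ne_zero (pow_ne_zero _ hr0) hf)]
  exact zpow_lt_one_of_neg₀ (by exact_mod_cast hp.out.one_lt) (by lia)

theorem stmt12 (p : ℕ) (hp : p.Prime) (r : ℚ) (hr : 1 ≤ padicValRat p r) (m : ℕ) :
    padicValRat p (legendreQ (2 * m) r) = padicValNat p ((2 * m).choose m) := by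
  have : Fact p.Prime := ⟨hp⟩
  have hC : ((2 * m).choose m : ℚ) ≠ 0 := by
    exact_mod_cast (Nat.choose_pos (show m ≤ 2 * m by lia)).ne'
  choose! N hN using centralBinom_dvd_coeff m
  let t : ℕ → ℚ := fun k =>
    (-1 : ℚ) ^ k * (N (m - k) : ℚ) * (r ^ (2 * (m - k)) / ((2 * (m - k)).factorial : ℚ))
  have hQ : legendreQ (2 * m) r
      = ((2 * m).choose m : ℚ) * (∑ k ∈ Finset.range m, t k + (-1 : ℚ) ^ m) := by
    unfold legendreQ
    rw [show 2 * m / 2 = m by lia, Finset.sum_range_succ, mul_add, Finset.mul_sum]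
    congr 1
    · refine Finset.sum_congr rfl fun k hk => ?_
      have hk := Finset.mem_range.mp hk
      have h := hN (m - k) (by lia)
      rw [show m - (m - k) = k by lia,
        show 2 * m + 2 * (m - k) = 2 * (2 * m) - 2 * k by lia] at h
      have h' : ((2 * m).choose k : ℚ) * ((2 * (2 * m) - 2 * k).choose (2 * m) : ℕ)
          * ((2 * (m - k)).factorial : ℕ) = ((2 * m).choose m : ℚ) * N (m - k) := by
        exact_mod_cast h
      have hf : ((2 * (m - k)).factorial : ℚ) ≠ 0 := by
        exact_mod_cast Nat.factorial_ne_zero _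
      rw [show 2 * m - 2 * k = 2 * (m - k) by lia]
      simp only [t]
      rw [mul_div_assoc', mul_div_assoc', eq_div_iff hf]
      linear_combination (-1 : ℚ) ^ k * r ^ (2 * (m - k)) * h'
    · rw [show 2 * (2 * m) - 2 * m = 2 * m by lia]
      simp [mul_comm]
  have ht : ∀ k ∈ Finset.range m, padicNorm p (t k) < 1 := by
    intro k hk
    have hk := Finset.mem_range.mp hk
    have h1 := padicNorm_pow_div_factorial_lt_one_s12 p r hr (2 * (m - k)) (by lia)
    have h2 : padicNorm p ((-1 : ℚ) ^ k * (N (m - k) : ℚ)) ≤ 1 := by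
      have := padicNorm.of_int (p := p) ((-1) ^ k * (N (m - k) : ℤ))
      push_cast at this
      exact this
    simp only [t]
    rw [padicNorm.mul]
    exact lt_of_le_of_lt (mul_le_of_le_one_left (padicNorm.nonneg _) h2) h1
  have hs : padicNorm p (∑ k ∈ Finset.range m, t k) < 1 :=
    padicNorm.sum_lt' ht one_pos
  have hone : padicNorm p ((-1 : ℚ) ^ m) = 1 := by
    rcases neg_one_pow_eq_or ℚ m with h | h <;> simp [h]
  have hu : padicNorm p (∑ k ∈ Finset.range m, t k + (-1 : ℚ) ^ m) = 1 := by
    rw [padicNorm.add_eq_max_of_ne (by rw [hone]; exact hs.ne), hone, max_eq_right hs.le]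
  have hu0 : ∑ k ∈ Finset.range m, t k + (-1 : ℚ) ^ m ≠ 0 := by
    intro h; rw [h] at hu; simp at hu
  have hv : padicValRat p (∑ k ∈ Finset.range m, t k + (-1 : ℚ) ^ m) = 0 := by
    rw [padicNorm.eq_zpow_of_nonzero hu0,
      zpow_eq_one_iff_right₀ (by positivity) (by exact_mod_cast hp.one_lt.ne')] at hu
    lia
  rw [hQ, padicValRat.mul hC hu0, hv, add_zero, padicValRat.of_nat]
end

section
/- Let p ≥ 3 be a prime number and r a rational number with ν_p(r) ≥ 1. For every integer m ≥ 0, ν_p(Q_{2m+1}(r)) = ν_p(r) + ν_p(2m+1) + ν_p(C(2m, m)), where Q_n(x) := Σ_{k=0}^{⌊n/2⌋} (−1)^k C(n,k) C(2n−2k, n) x^{n−2k} and C(a,b) denotes the binomial coefficient. -/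
/-- The absolute value of the coefficient of `x ^ (2 * j + 1)` in `Q_{2m+1}`, for `j ≤ m`. -/
def oddCoeff (m j : ℕ) : ℕ :=
  (2 * m + 1).choose (m - j) * (2 * m + 2 + 2 * j).choose (2 * m + 1)

lemma oddCoeff_mul_factorials {m j : ℕ} (hj : j ≤ m) :
    oddCoeff m j * ((m - j).factorial * (m + 1 + j).factorial * (2 * j + 1).factorial)
      = (2 * m + 2 + 2 * j).factorial := by
  have h1 := Nat.choose_mul_factorial_mul_factorial (n := 2 * m + 1) (k := m - j) (by omega)
  have h2 := Nat.choose_mul_factorial_mul_factorial (n := 2 * m + 2 + 2 * j) (k := 2 * m + 1)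
    (by omega)
  rw [show 2 * m + 1 - (m - j) = m + 1 + j by omega] at h1
  rw [show 2 * m + 2 + 2 * j - (2 * m + 1) = 2 * j + 1 by omega] at h2
  rw [← h2]
  rw [← h1]
  unfold oddCoeff
  ring

lemma oddCoeff_zero (m : ℕ) : oddCoeff m 0 = 2 * (2 * m + 1) * (2 * m).choose m := by
  have h1 := oddCoeff_mul_factorials (Nat.zero_le m)
  have h2 := Nat.choose_mul_factorial_mul_factorial (n := 2 * m) (k := m) (by omega)
  rw [show 2 * m - m = m by omega] at h2
  simp only [mul_zero, Nat.sub_zero, add_zero, zero_add, Nat.factorial_one, mul_one] at h1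
  rw [Nat.factorial_succ (2 * m + 1), Nat.factorial_succ (2 * m), ← h2, Nat.factorial_succ m] at h1
  have h3 : 0 < m.factorial * ((m + 1) * m.factorial) := by positivity
  apply Nat.eq_of_mul_eq_mul_right h3
  rw [h1]
  ring

lemma oddCoeff_succ {m j : ℕ} (hj : j + 1 ≤ m) :
    ((2 * j + 2) * (2 * j + 3)) * oddCoeff m (j + 1)
      = oddCoeff m j * (2 * (2 * m + 2 * j + 3) * (m - j)) := by
  have h1 := oddCoeff_mul_factorials hj
  have h2 := oddCoeff_mul_factorials (m := m) (j := j) (by omega)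
  obtain ⟨d, rfl⟩ : ∃ d, m = j + 1 + d := ⟨m - (j + 1), by omega⟩
  rw [show j + 1 + d - j = d + 1 by omega] at h2 ⊢
  rw [show j + 1 + d - (j + 1) = d by omega,
    show 2 * (j + 1 + d) + 2 + 2 * (j + 1) = 2 * (j + 1 + d) + 2 + 2 * j + 1 + 1 by ring,
    show j + 1 + d + 1 + (j + 1) = j + 1 + d + 1 + j + 1 by ring,
    show 2 * (j + 1) + 1 = 2 * j + 1 + 1 + 1 by ring,
    Nat.factorial_succ (2 * (j + 1 + d) + 2 + 2 * j + 1),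
    Nat.factorial_succ (2 * (j + 1 + d) + 2 + 2 * j), ← h2,
    Nat.factorial_succ (j + 1 + d + 1 + j), Nat.factorial_succ (2 * j + 1 + 1),
    Nat.factorial_succ (2 * j + 1), Nat.factorial_succ d] at h1
  have h3 : 0 < (j + 1 + d + 1 + j + 1) *
      (d.factorial * (j + 1 + d + 1 + j).factorial * (2 * j + 1).factorial) := by positivity
  apply Nat.eq_of_mul_eq_mul_right h3
  linear_combination h1

lemma exists_factorial_mul_oddCoeff (m j : ℕ) (hj : j ≤ m) :
    ∃ a : ℕ, (2 * j + 1).factorial * oddCoeff m j = oddCoeff m 0 * a := by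
  induction j with
  | zero => exact ⟨1, by simp⟩
  | succ j ih =>
    obtain ⟨a, ha⟩ := ih (by omega)
    refine ⟨a * (2 * (2 * m + 2 * j + 3) * (m - j)), ?_⟩
    have h := oddCoeff_succ hj
    rw [show 2 * (j + 1) + 1 = 2 * j + 1 + 1 + 1 by ring, Nat.factorial_succ (2 * j + 1 + 1),
      Nat.factorial_succ (2 * j + 1)]
    linear_combination (2 * j + 1).factorial * h + (2 * (2 * m + 2 * j + 3) * (m - j)) * ha

/-- The factor `r ^ (2 * j)` outweighs the denominator `(2 * j + 1)!`: by Legendre's formula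
`2 * ν_p((2j+1)!) ≤ (p - 1) * ν_p((2j+1)!) ≤ 2 * j + 1`. -/
lemma padicNorm_pow_lt_factorial {p : ℕ} [Fact p.Prime] (hp3 : 3 ≤ p) {r : ℚ}
    (hr : 1 ≤ padicValRat p r) {j : ℕ} (hj : 1 ≤ j) :
    padicNorm p r ^ (2 * j) < padicNorm p ((2 * j + 1).factorial : ℚ) := by
  have hr0 : r ≠ 0 := by
    rintro rfl
    simp at hr
  have hf0 : ((2 * j + 1).factorial : ℚ) ≠ 0 := by positivity
  have hL := sub_one_mul_padicValNat_factorial (p := p) (2 * j + 1)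
  have hL' : 2 * padicValNat p (2 * j + 1).factorial
      ≤ (p - 1) * padicValNat p (2 * j + 1).factorial := Nat.mul_le_mul_right _ (by omega)
  have hv : padicValNat p (2 * j + 1).factorial < 2 * j := by omega
  have hp1 : (1 : ℚ) < p := by exact_mod_cast (by omega : 1 < p)
  rw [padicNorm.eq_zpow_of_nonzero hr0, padicNorm.eq_zpow_of_nonzero hf0, padicValRat.of_nat,
    ← zpow_natCast, ← zpow_mul]
  apply zpow_lt_zpow_right₀ hp1
  push_cast
  zify at hv
  nlinarith

lemma padicValRat_eq_of_padicNorm_eq {p : ℕ} [Fact p.Prime] {a b : ℚ} (hb : b ≠ 0)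
    (h : padicNorm p a = padicNorm p b) : padicValRat p a = padicValRat p b := by
  have ha : a ≠ 0 := by
    rintro rfl
    exact padicNorm.nonzero hb (by rw [← h, padicNorm.zero])
  have hp1 : (1 : ℚ) < p := by exact_mod_cast (Fact.out : p.Prime).one_lt
  rw [padicNorm.eq_zpow_of_nonzero ha, padicNorm.eq_zpow_of_nonzero hb] at h
  exact neg_injective (zpow_right_injective₀ (by linarith) hp1.ne' h)

theorem stmt13 (p : ℕ) (hp : p.Prime) (hp3 : 3 ≤ p) (r : ℚ) (hr : 1 ≤ padicValRat p r)
    (m : ℕ) :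
    padicValRat p (legendreQ (2 * m + 1) r)
      = padicValRat p r + padicValNat p (2 * m + 1) + padicValNat p ((2 * m).choose m) := by
  have : Fact p.Prime := ⟨hp⟩
  have hr0 : r ≠ 0 := by
    rintro rfl
    simp at hr
  have hch : (2 * m).choose m ≠ 0 := (Nat.choose_pos (by omega)).ne'
  have hc : oddCoeff m 0 ≠ 0 := by
    rw [oddCoeff_zero]
    positivity
  have hcQ : (oddCoeff m 0 : ℚ) ≠ 0 := by exact_mod_cast hc
  have hsign (k : ℕ) : padicNorm p ((-1 : ℚ) ^ k) = 1 := by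
    rcases neg_one_pow_eq_or ℚ k with h | h <;> simp [h]
  have hterm (k : ℕ) (hk : k ≤ m) :
      padicNorm p ((-1 : ℚ) ^ k * ((2 * m + 1).choose k : ℚ) *
        (((2 * (2 * m + 1) - 2 * k).choose (2 * m + 1) : ℕ) : ℚ) * r ^ (2 * m + 1 - 2 * k))
      = padicNorm p (oddCoeff m (m - k) : ℚ) * padicNorm p r ^ (2 * (m - k) + 1) := by
    have hpow (e : ℕ) : padicNorm p (r ^ e) = padicNorm p r ^ e := by
      induction e with
      | zero => simp
      | succ e ih => rw [pow_succ, padicNorm.mul, ih, pow_succ]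
    rw [oddCoeff, show m - (m - k) = k by omega,
      show 2 * m + 2 + 2 * (m - k) = 2 * (2 * m + 1) - 2 * k by omega,
      show 2 * m + 1 - 2 * k = 2 * (m - k) + 1 by omega]
    push_cast
    rw [padicNorm.mul, padicNorm.mul, padicNorm.mul, padicNorm.mul, hsign, hpow, one_mul]
  have hlead : 0 < padicNorm p (oddCoeff m 0 : ℚ) * padicNorm p r :=
    mul_pos (lt_of_le_of_ne (padicNorm.nonneg _) (padicNorm.nonzero hcQ).symm)
      (lt_of_le_of_ne (padicNorm.nonneg _) (padicNorm.nonzero hr0).symm)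
  have hsmall (j : ℕ) (hj : 1 ≤ j) (hjm : j ≤ m) :
      padicNorm p (oddCoeff m j : ℚ) * padicNorm p r ^ (2 * j + 1)
        < padicNorm p (oddCoeff m 0 : ℚ) * padicNorm p r := by
    obtain ⟨a, ha⟩ := exists_factorial_mul_oddCoeff m j hjm
    have haN : padicNorm p ((2 * j + 1).factorial : ℚ) * padicNorm p (oddCoeff m j : ℚ)
        = padicNorm p (oddCoeff m 0 : ℚ) * padicNorm p (a : ℚ) := by
      rw [← padicNorm.mul, ← padicNorm.mul]
      exact_mod_cast congrArg (fun t : ℕ => padicNorm p (t : ℚ)) ha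
    have hlt := padicNorm_pow_lt_factorial hp3 hr hj
    have hF : 0 < padicNorm p ((2 * j + 1).factorial : ℚ) :=
      lt_of_le_of_lt (pow_nonneg (padicNorm.nonneg _) _) hlt
    refine lt_of_mul_lt_mul_left ?_ hF.le
    calc padicNorm p ((2 * j + 1).factorial : ℚ)
          * (padicNorm p (oddCoeff m j : ℚ) * padicNorm p r ^ (2 * j + 1))
        = padicNorm p (a : ℚ)
          * (padicNorm p (oddCoeff m 0 : ℚ) * padicNorm p r * padicNorm p r ^ (2 * j)) := by
          rw [← mul_assoc, haN]
          ring
      _ ≤ 1 * (padicNorm p (oddCoeff m 0 : ℚ) * padicNorm p r * padicNorm p r ^ (2 * j)) :=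
          mul_le_mul_of_nonneg_right (padicNorm.of_nat a)
            (mul_nonneg hlead.le (pow_nonneg (padicNorm.nonneg _) _))
      _ < padicNorm p ((2 * j + 1).factorial : ℚ)
          * (padicNorm p (oddCoeff m 0 : ℚ) * padicNorm p r) := by
          rw [one_mul, mul_comm (padicNorm p ((2 * j + 1).factorial : ℚ))]
          exact mul_lt_mul_of_pos_left hlt hlead
  have hnorm : padicNorm p (legendreQ (2 * m + 1) r) = padicNorm p ((oddCoeff m 0 : ℚ) * r) := by
    rw [legendreQ, show (2 * m + 1) / 2 + 1 = m + 1 by omega, Finset.sum_range_succ]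
    have hlast := hterm m le_rfl
    simp only [Nat.sub_self, mul_zero, zero_add, pow_one] at hlast
    have hrest := padicNorm.sum_lt' (p := p) (s := Finset.range m) (F := fun k =>
      (-1 : ℚ) ^ k * ((2 * m + 1).choose k : ℚ) *
        (((2 * (2 * m + 1) - 2 * k).choose (2 * m + 1) : ℕ) : ℚ) * r ^ (2 * m + 1 - 2 * k))
      (t := padicNorm p (oddCoeff m 0 : ℚ) * padicNorm p r)
      (fun k hk => by
        have hk' := Finset.mem_range.mp hk
        rw [hterm k hk'.le]
        exact hsmall _ (by omega) (by omega)) hlead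
    rw [← hlast] at hrest
    rw [padicNorm.add_eq_max_of_ne hrest.ne, max_eq_right hrest.le, hlast, padicNorm.mul]
  rw [padicValRat_eq_of_padicNorm_eq (mul_ne_zero hcQ hr0) hnorm, padicValRat.mul hcQ hr0,
    padicValRat.of_nat, oddCoeff_zero, padicValNat.mul (by positivity) hch,
    padicValNat.mul (by norm_num) (by omega),
    padicValNat.eq_zero_of_not_dvd (fun h => by have := Nat.le_of_dvd two_pos h; omega)]
  push_cast
  ring
end
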